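/- Let α, β > −1 and b^{(i,j)} := (a_{α+i,β+j,−1/2} / a_{α,β,−1/2})^{1/2}. For x = cos θ, y = cos φ (θ, φ ∈ [0,π]) write s := cos(θ−φ) and t := cos(θ+φ). Then for every n ≥ 0, the following 2n+1 functions of (x,y) ∈ [−1,1]² (each of which is a polynomial in (x,y)) form an orthonormal basis of V_{2n}(𝒲_{α,β,−1/2}): (1/√2)[p_n^{(α,β)}(s) p_k^{(α,β)}(t) + p_k^{(α,β)}(s) p_n^{(α,β)}(t)] for 0 ≤ k < n; p_n^{(α,β)}(s) p_n^{(α,β)}(t); b^{(1,1)} (1/√2) (x²−y²)[p_{n−1}^{(α+1,β+1)}(s) p_k^{(α+1,β+1)}(t) + p_k^{(α+1,β+1)}(s) p_{n−1}^{(α+1,β+1)}(t)] for 0 ≤ k < n−1; and b^{(1,1)} (x²−y²) p_{n−1}^{(α+1,β+1)}(s) p_{n−1}^{(α+1,β+1)}(t). Likewise, the following 2n+2 functions form an orthonormal basis of V_{2n+1}(𝒲_{α,β,−1/2}): b^{(0,1)} (1/√2) (x+y)[p_n^{(α,β+1)}(s) p_k^{(α,β+1)}(t) + p_k^{(α,β+1)}(s)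 p_n^{(α,β+1)}(t)] for 0 ≤ k < n; b^{(0,1)} (x+y) p_n^{(α,β+1)}(s) p_n^{(α,β+1)}(t); b^{(1,0)} (1/√2) (x−y)[p_n^{(α+1,β)}(s) p_k^{(α+1,β)}(t) + p_k^{(α+1,β)}(s) p_n^{(α+1,β)}(t)] for 0 ≤ k < n; and b^{(1,0)} (x−y) p_n^{(α+1,β)}(s) p_n^{(α+1,β)}(t). -/

import Mathlib

open MeasureTheory Real Set Filter
open scoped ENNReal

noncomputable section

/-- The parabolic-type domain `Ω`, the image of the triangle `-1 < x < y < 1`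
under `(x, y) ↦ (x + y, x y)`. -/
def omegaDom : Set (ℝ × ℝ) :=
  {q | ∃ x y : ℝ, -1 < x ∧ x < y ∧ y < 1 ∧ q = (x + y, x * y)}

/-- The square `[-1,1]²`. -/
def sqDom : Set (ℝ × ℝ) := Icc (-1 : ℝ) 1 ×ˢ Icc (-1 : ℝ) 1

/-- The open triangle `-1 < x < y < 1`. -/
def triDom : Set (ℝ × ℝ) := {q | -1 < q.1 ∧ q.1 < q.2 ∧ q.2 < 1}

/-- The smaller root `x(u,v)` of `t² - u t + v = 0`. -/
def xRoot (q : ℝ × ℝ) : ℝ := (q.1 - Real.sqrt (q.1 ^ 2 - 4 * q.2)) / 2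

/-- The larger root `y(u,v)` of `t² - u t + v = 0`. -/
def yRoot (q : ℝ × ℝ) : ℝ := (q.1 + Real.sqrt (q.1 ^ 2 - 4 * q.2)) / 2

/-- Evaluation of a two-variable polynomial at a point of `ℝ²`. -/
def evalP (P : MvPolynomial (Fin 2) ℝ) (q : ℝ × ℝ) : ℝ :=
  MvPolynomial.eval ![q.1, q.2] P

/-- The space `V_n(W)` of orthogonal polynomials of degree `n` for the weight `W`
on the domain `D`: polynomials of exact total degree `n` orthogonal to all
polynomials of lower degree. -/
def Vpoly (D : Set (ℝ × ℝ)) (W : ℝ × ℝ → ℝ) (n : ℕ) : Set (MvPolynomial (Fin 2) ℝ) :=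
  {P | P.totalDegree = n ∧ ∀ Q : MvPolynomial (Fin 2) ℝ, Q.totalDegree < n →
    (∫ q in D, evalP P q * evalP Q q * W q) = 0}

/-- `Q 0, …, Q n` is an orthonormal basis of `V_n(W)` on `D`. -/
def isONBVn (D : Set (ℝ × ℝ)) (W : ℝ × ℝ → ℝ) (n : ℕ)
    (Q : ℕ → MvPolynomial (Fin 2) ℝ) : Prop :=
  (∀ k, k ≤ n → Q k ∈ Vpoly D W n) ∧
  (∀ k, k ≤ n → ∀ j, j ≤ n →
    (∫ q in D, evalP (Q k) q * evalP (Q j) q * W q) = if k = j then 1 else 0) ∧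
  (∀ R ∈ Vpoly D W n, R ∈ Submodule.span ℝ (Q '' Set.Iic n))

/-- `K` is the reproducing kernel of `Π_n²` in `L²(W)` on the domain `D`:
it is a polynomial function, for each fixed `x ∈ D` it is a polynomial of total
degree `≤ n` in the second variable, and it reproduces every polynomial of total
degree `≤ n`. -/
def IsRK (D : Set (ℝ × ℝ)) (W : ℝ × ℝ → ℝ) (n : ℕ) (K : ℝ × ℝ → ℝ × ℝ → ℝ) : Prop :=
  (∃ KP : MvPolynomial (Fin 4) ℝ,
    ∀ x y : ℝ × ℝ, K x y = MvPolynomial.eval ![x.1, x.2, y.1, y.2] KP) ∧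
  (∀ x ∈ D, ∃ P : MvPolynomial (Fin 2) ℝ, P.totalDegree ≤ n ∧ ∀ y, K x y = evalP P y) ∧
  (∀ P : MvPolynomial (Fin 2) ℝ, P.totalDegree ≤ n →
    ∀ x ∈ D, (∫ y in D, K x y * evalP P y * W y) = evalP P x)

/-- `p` is the sequence of orthonormal polynomials with respect to the weight `w`
on `[-1,1]`: `p n` has degree exactly `n`, positive leading coefficient, and the
`p n` are orthonormal in `L²(w)`. -/
def IsONPS (w : ℝ → ℝ) (p : ℕ → Polynomial ℝ) : Prop :=
  (∀ n, (p n).natDegree = n) ∧ (∀ n, 0 < (p n).leadingCoeff) ∧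
  (∀ n m, (∫ x in Icc (-1:ℝ) 1, (p n).eval x * (p m).eval x * w x)
    = if n = m then 1 else 0)

/-- The Christoffel–Darboux kernel `k_n(x,y) = ∑_{j=0}^n p_j(x) p_j(y)`. -/
def CDK (p : ℕ → Polynomial ℝ) (n : ℕ) (x y : ℝ) : ℝ :=
  ∑ j ∈ Finset.range (n + 1), (p j).eval x * (p j).eval y

/-- The Jacobi factor `J_{a,b}(x) = (1-x)^a (1+x)^b`. -/
def Jw (a b : ℝ) (x : ℝ) : ℝ := (1 - x) ^ a * (1 + x) ^ b

/-- The factor `J*_{a,b}(u,v) = (1-u+v)^a (1+u+v)^b` on `Ω`. -/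
def JstarW (a b : ℝ) (q : ℝ × ℝ) : ℝ := (1 - q.1 + q.2) ^ a * (1 + q.1 + q.2) ^ b

/-- Modulus of continuity of `ψ` on `[-1,1]`. -/
def modCont (ψ : ℝ → ℝ) (t : ℝ) : ℝ :=
  sSup {d : ℝ | ∃ x ∈ Icc (-1:ℝ) 1, ∃ y ∈ Icc (-1:ℝ) 1, |x - y| ≤ t ∧ d = |ψ x - ψ y|}

/-- The generalized Jacobi class `GJ`. -/
def IsGJ (w : ℝ → ℝ) : Prop :=
  ∃ (r : ℕ) (ψ : ℝ → ℝ) (γ₀ γ₁ : ℝ) (γs xs : Fin r → ℝ),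
    -1 < γ₀ ∧ -1 < γ₁ ∧ (∀ i, -1 < γs i) ∧
    StrictMono xs ∧ (∀ i, xs i ∈ Ioo (-1:ℝ) 1) ∧
    ContinuousOn ψ (Icc (-1:ℝ) 1) ∧ (∀ x ∈ Icc (-1:ℝ) 1, 0 < ψ x) ∧
    IntegrableOn (fun t => modCont ψ t / t) (Ioc (0:ℝ) 1) ∧
    (∀ x : ℝ, |x| ≤ 1 → w x = ψ x * (1 - x) ^ γ₀ * (1 + x) ^ γ₁ * ∏ i, |x - xs i| ^ γs i) ∧
    (∀ x : ℝ, 1 < |x| → w x = 0)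

/-- The `L^p`-norm `‖f‖_{w,e}` on `[-1,1]` (as an extended nonnegative real). -/
def lpnormI (w : ℝ → ℝ) (e : ℝ) (f : ℝ → ℝ) : ℝ≥0∞ :=
  (∫⁻ x in Icc (-1:ℝ) 1, ENNReal.ofReal (|f x| ^ e * w x)) ^ (1 / e)

/-- The `L^p`-norm `‖f‖_{W,e}` on a planar domain `D` (as an extended nonnegative real). -/
def lpnormD (D : Set (ℝ × ℝ)) (W : ℝ × ℝ → ℝ) (e : ℝ) (f : ℝ × ℝ → ℝ) : ℝ≥0∞ :=
  (∫⁻ q in D, ENNReal.ofReal (|f q| ^ e * W q)) ^ (1 / e)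

/-- The operator `s_n^{i,j}(w; f, x)` built from the Christoffel–Darboux kernel of the
orthonormal polynomials `pij` of the weight `J_{i,j} w`. -/
def snOp (w : ℝ → ℝ) (pij : ℕ → Polynomial ℝ) (i j : ℝ) (n : ℕ) (f : ℝ → ℝ) (x : ℝ) : ℝ :=
  Jw (i/2) (j/2) x * ∫ y in Icc (-1:ℝ) 1, f y * CDK pij n x y * Jw (i/2) (j/2) y * w y

/-- Substitution `(x, y) ↦ (2 x y, x² + y² - 1)` on two-variable polynomials. -/
def quadSub (P : MvPolynomial (Fin 2) ℝ) : MvPolynomial (Fin 2) ℝ :=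
  MvPolynomial.aeval
    ![2 * MvPolynomial.X 0 * MvPolynomial.X 1,
      MvPolynomial.X 0 ^ 2 + MvPolynomial.X 1 ^ 2 - 1] P

/-- A one-variable polynomial viewed as a polynomial in the first variable. -/
def polyX (q : Polynomial ℝ) : MvPolynomial (Fin 2) ℝ :=
  Polynomial.aeval (MvPolynomial.X 0) q

/-- A one-variable polynomial viewed as a polynomial in the second variable. -/
def polyY (q : Polynomial ℝ) : MvPolynomial (Fin 2) ℝ :=
  Polynomial.aeval (MvPolynomial.X 1) q

/-! With `s = cos (θ - φ)` and `t = cos (θ + φ)`, the point `(x, y) = (cos θ, cos φ)` satisfies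
`s + t = 2 x y` and `s t = x ^ 2 + y ^ 2 - 1`. The map `(x, y) ↦ (2 x y, x ^ 2 + y ^ 2 - 1)` folds
the square four-to-one onto `Ω`, with the reflections in the two diagonals as deck transformations,
and `(s, t) ↦ (s + t, s t)` folds it two-to-one. Comparing the two turns integrals against
`𝒲_{α,β,-1/2}` into integrals of symmetric functions against `w(s) w(t)`, for which the symmetrized
products of orthonormal polynomials are orthonormal.

A factor `(x - y) ^ i (x + y) ^ j` with `i, j ∈ {0, 1}` fixes the parity under each reflection, so
that different `(i, j)` give orthogonal families. Since `(1 - s) (1 - t) = (x - y) ^ 2` and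
`(1 + s) (1 + t) = (x + y) ^ 2`, its square replaces `(α, β)` by `(α + i, β + j)`. Each `N` thus
contributes `N + 1` polynomials of degree at most `N`, orthonormal also to those of every other `N`;
counting dimensions, they span. -/

section LinearAlgebra

open Module

lemma eq_sum_smul_of_orthonormal {K V ι : Type*} [Field K] [AddCommGroup V] [Module K V]
    [Fintype ι] [DecidableEq ι] (B : LinearMap.BilinForm K V) {v : ι → V}
    (hv : ∀ i j, B (v i) (v j) = if i = j then 1 else 0) {S : Submodule K V}
    [FiniteDimensional K S] (hvS : ∀ i, v i ∈ S) (hcard : finrank K S ≤ Fintype.card ι)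
    {x : V} (hx : x ∈ S) : x = ∑ i, B x (v i) • v i := by
  have hB : ∀ (c : ι → K) j, B (∑ i, c i • v i) (v j) = c j := fun c j => by
    simp [LinearMap.sum_apply, hv]
  have hli : LinearIndependent K v := by
    refine LinearMap.BilinForm.linearIndependent_of_iIsOrtho (B := B) (fun i j hij => ?_) ?_
    · simpa [hij] using hv i j
    · simp [hv]
  have hspan : Submodule.span K (range v) = S :=
    Submodule.eq_of_le_of_finrank_le (Submodule.span_le.2 (range_subset_iff.2 hvS))
      (by rwa [finrank_span_eq_card hli])
  obtain ⟨c, rfl⟩ := (Submodule.mem_span_range_iff_exists_fun K).1 (hspan ▸ hx)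
  simp only [hB]

/-- The indices `(M, k)` with `k ≤ M ≤ N`, which label a graded basis of the bivariate polynomials
of total degree at most `N`. -/
abbrev GradedIndex (N : ℕ) : Type := Σ M : Fin (N + 1), Fin (M + 1)

lemma finrank_restrictTotalDegree_fin_two_le (K : Type*) [Field K] (N : ℕ) :
    finrank K (MvPolynomial.restrictTotalDegree (Fin 2) K N) ≤ Fintype.card (GradedIndex N) := by
  let S : Set (Fin 2 →₀ ℕ) := {s | s.sum (fun _ e => e) ≤ N}
  have hS : ∀ s ∈ S, s 0 + s 1 < N + 1 := fun s hs => by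
    have hs : s.sum (fun _ e => e) ≤ N := hs
    rw [Finsupp.sum_fintype _ _ fun _ => rfl, Fin.sum_univ_two] at hs
    omega
  let e : S → GradedIndex N := fun s => ⟨⟨s.1 0 + s.1 1, hS s s.2⟩, ⟨s.1 0, by simp⟩⟩
  have he : Function.Injective e := fun s t hst => by
    simp only [e, Sigma.mk.injEq, Fin.mk.injEq] at hst
    obtain ⟨hsum, hfst⟩ := hst
    rw [Fin.heq_ext_iff (by omega)] at hfst
    ext i
    fin_cases i
    · exact hfst
    · simp only at hfst; simp; omega
  rw [← Nat.card_eq_fintype_card]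
  exact (finrank_eq_nat_card_basis (MvPolynomial.basisRestrictSupport K S)).trans_le
    (Nat.card_le_card_of_injective e he)

end LinearAlgebra

section OrthonormalBasis

lemma evalP_mul (P Q : MvPolynomial (Fin 2) ℝ) (q : ℝ × ℝ) :
    evalP (P * Q) q = evalP P q * evalP Q q := map_mul _ P Q

lemma evalP_smul (c : ℝ) (P : MvPolynomial (Fin 2) ℝ) (q : ℝ × ℝ) :
    evalP (c • P) q = c * evalP P q := MvPolynomial.smul_eval ..

lemma continuous_evalP (P : MvPolynomial (Fin 2) ℝ) : Continuous (evalP P) :=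
  (MvPolynomial.continuous_eval P).comp <|
    continuous_pi <| Fin.forall_fin_two.2 ⟨continuous_fst, continuous_snd⟩

variable {D : Set (ℝ × ℝ)} {W : ℝ × ℝ → ℝ}

lemma integrableOn_evalP_mul_evalP_mul (hD : IsCompact D) (hW : IntegrableOn W D)
    (P Q : MvPolynomial (Fin 2) ℝ) : IntegrableOn (fun q => evalP P q * evalP Q q * W q) D :=
  hW.continuousOn_mul ((continuous_evalP P).mul (continuous_evalP Q)).continuousOn hD

/-- The inner product of `L²(W)` on the compact domain `D`, restricted to polynomials. -/
def weightForm (hD : IsCompact D) (hW : IntegrableOn W D) :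
    LinearMap.BilinForm ℝ (MvPolynomial (Fin 2) ℝ) :=
  LinearMap.mk₂ ℝ (fun P Q => ∫ q in D, evalP P q * evalP Q q * W q)
    (fun P P' Q => by
      rw [← integral_add (integrableOn_evalP_mul_evalP_mul hD hW P Q)
        (integrableOn_evalP_mul_evalP_mul hD hW P' Q)]
      simp only [evalP, map_add, add_mul])
    (fun c P Q => by simp only [evalP_smul, mul_assoc, integral_const_mul, smul_eq_mul])
    (fun P Q Q' => by
      rw [← integral_add (integrableOn_evalP_mul_evalP_mul hD hW P Q)
        (integrableOn_evalP_mul_evalP_mul hD hW P Q')]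
      simp only [evalP, map_add, mul_add, add_mul])
    (fun c P Q => by
      simp only [evalP_smul, mul_left_comm _ c, mul_assoc, integral_const_mul, smul_eq_mul])

lemma weightForm_apply (hD : IsCompact D) (hW : IntegrableOn W D) (P Q : MvPolynomial (Fin 2) ℝ) :
    weightForm hD hW P Q = ∫ q in D, evalP P q * evalP Q q * W q := rfl

variable {Q : ℕ → ℕ → MvPolynomial (Fin 2) ℝ}

lemma eq_sum_weightForm_smul (hD : IsCompact D) (hW : IntegrableOn W D)
    (hdeg : ∀ N k, k ≤ N → (Q N k).totalDegree ≤ N)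
    (horth : ∀ N k M l, k ≤ N → l ≤ M →
      weightForm hD hW (Q N k) (Q M l) = if N = M ∧ k = l then 1 else 0)
    {N : ℕ} {R : MvPolynomial (Fin 2) ℝ} (hR : R.totalDegree ≤ N) :
    R = ∑ i : GradedIndex N, weightForm hD hW R (Q i.1 i.2) • Q i.1 i.2 := by
  refine eq_sum_smul_of_orthonormal _ (v := fun i : GradedIndex N => Q i.1 i.2) ?_ ?_
    (finrank_restrictTotalDegree_fin_two_le ℝ N)
    ((MvPolynomial.mem_restrictTotalDegree _ _ _).2 hR)
  · rintro ⟨⟨M, hM⟩, ⟨k, hk⟩⟩ ⟨⟨M', hM'⟩, ⟨l, hl⟩⟩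
    rw [horth _ _ _ _ (Nat.le_of_lt_succ hk) (Nat.le_of_lt_succ hl)]
    congr 1
    simp only [eq_iff_iff, Sigma.mk.injEq, Fin.mk.injEq]
    exact and_congr_right fun h => by subst h; simp
  · rintro ⟨⟨M, hM⟩, ⟨k, hk⟩⟩
    exact (MvPolynomial.mem_restrictTotalDegree _ _ _).2
      ((hdeg M k (Nat.le_of_lt_succ hk)).trans (Nat.le_of_lt_succ hM))

lemma isONBVn_of_orthonormal (hD : IsCompact D) (hW : IntegrableOn W D)
    (hdeg : ∀ N k, k ≤ N → (Q N k).totalDegree ≤ N)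
    (horth : ∀ N k M l, k ≤ N → l ≤ M →
      ∫ q in D, evalP (Q N k) q * evalP (Q M l) q * W q = if N = M ∧ k = l then 1 else 0)
    (N : ℕ) : isONBVn D W N (Q N) := by
  simp only [← weightForm_apply hD hW] at horth
  have hlow : ∀ k ≤ N, ∀ R : MvPolynomial (Fin 2) ℝ, R.totalDegree < N →
      weightForm hD hW (Q N k) R = 0 := by
    intro k hk R hR
    rw [eq_sum_weightForm_smul hD hW hdeg horth (Nat.le_sub_one_of_lt hR), map_sum]
    refine Finset.sum_eq_zero fun i _ => ?_
    rw [map_smul, horth _ _ _ _ hk (Nat.le_of_lt_succ i.2.2), if_neg (by omega), smul_zero]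
  refine ⟨fun k hk => ⟨(hdeg N k hk).antisymm ?_, hlow k hk⟩, fun k hk j hj => ?_, ?_⟩
  · by_contra! hlt
    simpa [horth N k N k hk hk] using hlow k hk _ hlt
  · simpa [weightForm_apply] using horth N k N j hk hj
  · rintro R ⟨hR, hR'⟩
    rw [eq_sum_weightForm_smul hD hW hdeg horth hR.le]
    refine Submodule.sum_mem _ fun ⟨⟨M, hM⟩, ⟨k, hk⟩⟩ _ => ?_
    rcases (Nat.le_of_lt_succ hM).eq_or_lt with rfl | hMN
    · exact Submodule.smul_mem _ _
        (Submodule.subset_span (mem_image_of_mem _ (Nat.le_of_lt_succ hk)))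
    · rw [weightForm_apply, hR' _ ((hdeg M k (Nat.le_of_lt_succ hk)).trans_lt hMN), zero_smul]
      exact Submodule.zero_mem _

lemma isONBVn_congr_ae {W' : ℝ × ℝ → ℝ} (h : W =ᵐ[volume.restrict D] W') {n : ℕ}
    {P : ℕ → MvPolynomial (Fin 2) ℝ} : isONBVn D W n P ↔ isONBVn D W' n P := by
  have hint : ∀ R S : MvPolynomial (Fin 2) ℝ, ∫ q in D, evalP R q * evalP S q * W q =
      ∫ q in D, evalP R q * evalP S q * W' q := fun R S =>
    integral_congr_ae (h.mono fun q hq => by simp only [hq])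
  simp only [isONBVn, Vpoly, hint]

end OrthonormalBasis

section SymmetricPolynomials

open Polynomial

/-- The power sum `x ^ n + y ^ n` as a polynomial in the elementary symmetric functions
`u = x + y` and `v = x y`. The Dickson recursion is `S (n + 2) = u * S (n + 1) - v * S n`. -/
def powerSum (n : ℕ) : MvPolynomial (Fin 2) ℝ :=
  (dickson 1 (MvPolynomial.X 1) n).eval (MvPolynomial.X 0)

lemma powerSum_add_two (n : ℕ) :
    powerSum (n + 2) = MvPolynomial.X 0 * powerSum (n + 1) - MvPolynomial.X 1 * powerSum n := by
  simp [powerSum, dickson_add_two]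

lemma evalP_powerSum (n : ℕ) (x y : ℝ) : evalP (powerSum n) (x + y, x * y) = x ^ n + y ^ n := by
  induction n using Nat.twoStepInduction with
  | zero => norm_num [evalP, powerSum]
  | one => simp [evalP, powerSum]
  | more n ih₀ ih₁ =>
    simp only [evalP] at ih₀ ih₁ ⊢
    simp only [powerSum_add_two, map_sub, map_mul, ih₀, ih₁, MvPolynomial.eval_X,
      Matrix.cons_val_zero, Matrix.cons_val_one]
    ring

lemma totalDegree_powerSum_le (n : ℕ) : (powerSum n).totalDegree ≤ n := by
  induction n using Nat.twoStepInduction with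
  | zero =>
    have h : powerSum 0 = MvPolynomial.C 2 := by
      rw [map_ofNat]
      norm_num [powerSum]
    rw [h, MvPolynomial.totalDegree_C]
  | one => simp [powerSum]
  | more n ih₀ ih₁ =>
    rw [powerSum_add_two]
    refine (MvPolynomial.totalDegree_sub _ _).trans (max_le ?_ ?_) <;>
      refine (MvPolynomial.totalDegree_mul _ _).trans ?_ <;>
      rw [MvPolynomial.totalDegree_X] <;> omega

/-- The symmetrised monomial `x ^ i * y ^ j + x ^ j * y ^ i` as a polynomial in
`u = x + y` and `v = x y`. -/
def symmMonomial (i j : ℕ) : MvPolynomial (Fin 2) ℝ :=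
  MvPolynomial.X 1 ^ min i j * powerSum (max i j - min i j)

lemma evalP_symmMonomial (i j : ℕ) (x y : ℝ) :
    evalP (symmMonomial i j) (x + y, x * y) = x ^ i * y ^ j + x ^ j * y ^ i := by
  rw [symmMonomial, evalP_mul, evalP_powerSum]
  rcases le_total i j with h | h <;> obtain ⟨d, rfl⟩ := Nat.exists_eq_add_of_le h <;>
    simp [evalP] <;> ring

lemma totalDegree_symmMonomial_le (i j : ℕ) : (symmMonomial i j).totalDegree ≤ max i j := by
  refine (MvPolynomial.totalDegree_mul _ _).trans ?_
  rw [MvPolynomial.totalDegree_X_pow]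
  have := totalDegree_powerSum_le (max i j - min i j)
  omega

/-- The symmetrised product `f(x) g(y) + g(x) f(y)` as a polynomial in
`u = x + y` and `v = x y`. -/
def symmProd (f g : ℝ[X]) : MvPolynomial (Fin 2) ℝ :=
  f.sum fun i a => g.sum fun j b => (a * b) • symmMonomial i j

lemma evalP_symmProd (f g : ℝ[X]) (x y : ℝ) :
    evalP (symmProd f g) (x + y, x * y) = f.eval x * g.eval y + g.eval x * f.eval y := by
  have h (i j : ℕ) := evalP_symmMonomial i j x y
  simp only [evalP] at h
  simp only [symmProd, Polynomial.sum, evalP, map_sum, MvPolynomial.smul_eval, h,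
    eval_eq_sum, Finset.sum_mul_sum, mul_comm (∑ _i ∈ g.support, _), ← Finset.sum_add_distrib]
  exact Finset.sum_congr rfl fun i _ => Finset.sum_congr rfl fun j _ => by ring

lemma totalDegree_symmProd_le (f g : ℝ[X]) :
    (symmProd f g).totalDegree ≤ max f.natDegree g.natDegree :=
  MvPolynomial.totalDegree_finsetSum_le fun _ hi =>
    MvPolynomial.totalDegree_finsetSum_le fun _ hj =>
      (MvPolynomial.totalDegree_smul_le _ _).trans <| (totalDegree_symmMonomial_le _ _).trans <|
        max_le_max (le_natDegree_of_mem_supp _ hi) (le_natDegree_of_mem_supp _ hj)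

end SymmetricPolynomials

section QuadraticSubstitution

lemma totalDegree_aeval_le {R σ τ : Type*} [CommSemiring R] {f : σ → MvPolynomial τ R} {d : ℕ}
    (hf : ∀ i, (f i).totalDegree ≤ d) (P : MvPolynomial σ R) :
    (MvPolynomial.aeval f P).totalDegree ≤ d * P.totalDegree := by
  rw [MvPolynomial.aeval_def, MvPolynomial.eval₂_eq]
  refine MvPolynomial.totalDegree_finsetSum_le fun s hs => ?_
  calc _ ≤ ∑ i ∈ s.support, (f i ^ s i).totalDegree := by
        rw [MvPolynomial.algebraMap_eq]
        refine (MvPolynomial.totalDegree_mul _ _).trans ?_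
        rw [MvPolynomial.totalDegree_C, zero_add]
        exact MvPolynomial.totalDegree_finsetProd _ _
    _ ≤ ∑ i ∈ s.support, d * s i := Finset.sum_le_sum fun i _ =>
        (MvPolynomial.totalDegree_pow _ _).trans (by rw [mul_comm]; gcongr; exact hf i)
    _ ≤ d * P.totalDegree := by
        rw [← Finset.mul_sum]
        gcongr
        exact MvPolynomial.le_totalDegree hs

/-- The quadratic map `(x, y) ↦ (2 x y, x ^ 2 + y ^ 2 - 1)`, which folds the square `[-1, 1] ^ 2`
onto the closure of `Ω`. -/
def quadMap (q : ℝ × ℝ) : ℝ × ℝ := (2 * q.1 * q.2, q.1 ^ 2 + q.2 ^ 2 - 1)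

lemma evalP_quadSub (P : MvPolynomial (Fin 2) ℝ) (q : ℝ × ℝ) :
    evalP (quadSub P) q = evalP P (quadMap q) := by
  simp only [evalP, ← MvPolynomial.coe_aeval_eq_eval, RingHom.coe_coe]
  refine (MvPolynomial.aeval_bind₁ _ _ P).trans ?_
  congr 2
  funext i
  fin_cases i <;> simp [quadMap]

lemma totalDegree_quadSub_le (P : MvPolynomial (Fin 2) ℝ) :
    (quadSub P).totalDegree ≤ 2 * P.totalDegree := by
  have hu : (2 * MvPolynomial.X 0 * MvPolynomial.X 1 : MvPolynomial (Fin 2) ℝ).totalDegree ≤ 2 := by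
    have h : (2 * MvPolynomial.X 0 * MvPolynomial.X 1 : MvPolynomial (Fin 2) ℝ) =
        (2 : ℝ) • (MvPolynomial.X 0 * MvPolynomial.X 1) := by
      rw [MvPolynomial.smul_eq_C_mul, map_ofNat, mul_assoc]
    rw [h]
    exact (MvPolynomial.totalDegree_smul_le _ _).trans <|
      (MvPolynomial.totalDegree_mul _ _).trans (by simp)
  have hv : (MvPolynomial.X 0 ^ 2 + MvPolynomial.X 1 ^ 2 - 1 :
      MvPolynomial (Fin 2) ℝ).totalDegree ≤ 2 :=
    (MvPolynomial.totalDegree_sub _ _).trans <| max_le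
      ((MvPolynomial.totalDegree_add _ _).trans (by simp)) (by simp)
  exact totalDegree_aeval_le (Fin.forall_fin_two.2 ⟨hu, hv⟩) P

end QuadraticSubstitution

section Reflections

variable {X E : Type*} [MeasurableSpace X] [NormedAddCommGroup E] {μ : Measure X} {σ : X ≃ᵐ X}
  {f : X → E} {S T : Set X}

lemma integrableOn_iff_of_ae_eq_union_preimage (hσ : MeasurePreserving σ μ μ)
    (hf : ∀ x, f (σ x) = f x) (hS : S =ᵐ[μ] (T ∪ σ ⁻¹' T : Set X)) :
    IntegrableOn f S μ ↔ IntegrableOn f T μ := by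
  have hT : IntegrableOn f (σ ⁻¹' T) μ ↔ IntegrableOn f T μ := by
    simpa only [Function.comp_def, hf] using
      hσ.integrableOn_comp_preimage (f := f) (s := T) σ.measurableEmbedding
  rw [integrableOn_congr_set_ae hS, integrableOn_union, hT, and_self_iff]

variable [NormedSpace ℝ E]

lemma setIntegral_eq_two_smul_of_ae_eq_union_preimage (hσ : MeasurePreserving σ μ μ)
    (hf : ∀ x, f (σ x) = f x) (hT : MeasurableSet T) (hd : Disjoint T (σ ⁻¹' T))
    (hS : S =ᵐ[μ] (T ∪ σ ⁻¹' T : Set X)) : ∫ x in S, f x ∂μ = (2 : ℝ) • ∫ x in T, f x ∂μ := by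
  have hiff := integrableOn_iff_of_ae_eq_union_preimage hσ hf hS
  by_cases hi : IntegrableOn f T μ
  · have hpre : ∫ x in σ ⁻¹' T, f x ∂μ = ∫ x in T, f x ∂μ := by
      simpa only [hf] using hσ.setIntegral_preimage_emb σ.measurableEmbedding f T
    have hi' := (integrableOn_congr_set_ae hS).1 (hiff.2 hi)
    rw [setIntegral_congr_set hS, setIntegral_union hd (σ.measurable hT) hi hi'.right_of_union,
      hpre, two_smul]
  · rw [integral_undef hi, integral_undef (hiff.not.2 hi), smul_zero]

lemma setIntegral_eq_zero_of_odd (hσ : MeasurePreserving σ μ μ) (hS : σ ⁻¹' S = S)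
    (hf : ∀ x, f (σ x) = -f x) : ∫ x in S, f x ∂μ = 0 := by
  have h := hσ.setIntegral_preimage_emb σ.measurableEmbedding f S
  simp only [hS, hf, integral_neg] at h
  have : IsAddTorsionFree E := .of_isTorsionFree ℝ E
  exact self_eq_neg.1 h.symm

/-- The reflection of the plane in the diagonal `x = y`. -/
def diagReflection : ℝ × ℝ ≃ᵐ ℝ × ℝ := MeasurableEquiv.prodComm

/-- The reflection of the plane in the antidiagonal `x = -y`. -/
def antidiagReflection : ℝ × ℝ ≃ᵐ ℝ × ℝ :=
  diagReflection.trans (.prodCongr (.neg ℝ) (.neg ℝ))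

lemma diagReflection_apply (q : ℝ × ℝ) : diagReflection q = (q.2, q.1) := rfl

lemma antidiagReflection_apply (q : ℝ × ℝ) : antidiagReflection q = (-q.2, -q.1) := rfl

lemma measurePreserving_diagReflection :
    MeasurePreserving diagReflection (volume : Measure (ℝ × ℝ)) volume :=
  Measure.measurePreserving_swap

lemma measurePreserving_antidiagReflection :
    MeasurePreserving antidiagReflection (volume : Measure (ℝ × ℝ)) volume :=
  ((Measure.measurePreserving_neg (volume : Measure ℝ)).prod
    (Measure.measurePreserving_neg (volume : Measure ℝ))).comp measurePreserving_diagReflection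

lemma preimage_diagReflection_sqDom : diagReflection ⁻¹' sqDom = sqDom := by
  ext q
  simp only [sqDom, mem_preimage, diagReflection_apply, mem_prod, and_comm]

lemma preimage_antidiagReflection_sqDom : antidiagReflection ⁻¹' sqDom = sqDom := by
  ext q
  simp only [sqDom, mem_preimage, antidiagReflection_apply, mem_prod, mem_Icc]
  grind

end Reflections

section Domains

/-- The quarter of the square `[-1, 1] ^ 2` above both diagonals, on which `quadMap` is
injective. -/
def quarterDom : Set (ℝ × ℝ) := {q | q.1 < q.2 ∧ 0 < q.1 + q.2 ∧ q.2 < 1}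

lemma measurableSet_triDom : MeasurableSet triDom :=
  ((isOpen_lt continuous_const continuous_fst).inter <|
    (isOpen_lt continuous_fst continuous_snd).inter
      (isOpen_lt continuous_snd continuous_const)).measurableSet

lemma measurableSet_quarterDom : MeasurableSet quarterDom :=
  ((isOpen_lt continuous_fst continuous_snd).inter <|
    (isOpen_lt continuous_const (continuous_fst.add continuous_snd)).inter
      (isOpen_lt continuous_snd continuous_const)).measurableSet

lemma ae_fst_ne_mul_snd (c : ℝ) : ∀ᵐ q : ℝ × ℝ, q.1 ≠ c * q.2 := by
  let l : ℝ × ℝ →ₗ[ℝ] ℝ := LinearMap.fst ℝ ℝ ℝ - c • LinearMap.snd ℝ ℝ ℝ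
  have hl : LinearMap.ker l ≠ ⊤ := fun h => by
    simpa [l] using LinearMap.congr_fun (LinearMap.ker_eq_top.1 h) (1, 0)
  refine (measure_eq_zero_iff_ae_notMem.1 (Measure.addHaar_submodule volume _ hl)).mono
    fun q hq h => hq ?_
  simp [l, h]

lemma sqDom_ae_eq_Ioo_prod_Ioo :
    sqDom =ᵐ[volume] (Ioo (-1 : ℝ) 1 ×ˢ Ioo (-1 : ℝ) 1 : Set (ℝ × ℝ)) :=
  Measure.set_prod_ae_eq Ioo_ae_eq_Icc.symm Ioo_ae_eq_Icc.symm

lemma sqDom_ae_eq_triDom_union :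
    sqDom =ᵐ[volume] (triDom ∪ diagReflection ⁻¹' triDom : Set (ℝ × ℝ)) := by
  refine sqDom_ae_eq_Ioo_prod_Ioo.trans (eventuallyEq_set.2 ?_)
  filter_upwards [ae_fst_ne_mul_snd 1] with q hne
  simp only [mem_prod, mem_Ioo, triDom, mem_union, mem_preimage, diagReflection_apply,
    mem_ofPred_eq]
  grind

lemma triDom_ae_eq_quarterDom_union :
    triDom =ᵐ[volume] (quarterDom ∪ antidiagReflection ⁻¹' quarterDom : Set (ℝ × ℝ)) := by
  refine eventuallyEq_set.2 ?_
  filter_upwards [ae_fst_ne_mul_snd (-1)] with q hne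
  simp only [triDom, quarterDom, mem_union, mem_preimage, antidiagReflection_apply,
    mem_ofPred_eq]
  grind

lemma disjoint_triDom_diagReflection : Disjoint triDom (diagReflection ⁻¹' triDom) :=
  Set.disjoint_left.2 fun _ h h' => h.2.1.not_gt h'.2.1

lemma disjoint_quarterDom_antidiagReflection :
    Disjoint quarterDom (antidiagReflection ⁻¹' quarterDom) :=
  Set.disjoint_left.2 fun q ⟨_, h, _⟩ ⟨_, h', _⟩ => by
    simp only [antidiagReflection_apply] at h'
    linarith

/-- The elementary symmetric functions `(x, y) ↦ (x + y, x y)`, which fold the square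
`[-1, 1] ^ 2` onto the closure of `Ω`. -/
def symMap (q : ℝ × ℝ) : ℝ × ℝ := (q.1 + q.2, q.1 * q.2)

lemma mem_omegaDom_iff {q : ℝ × ℝ} : q ∈ omegaDom ↔
    0 < q.1 ^ 2 - 4 * q.2 ∧ 0 < 1 - q.1 + q.2 ∧ 0 < 1 + q.1 + q.2 ∧ |q.1| < 2 := by
  obtain ⟨u, v⟩ := q
  constructor
  · rintro ⟨x, y, hx, hxy, hy, h⟩
    obtain ⟨rfl, rfl⟩ := Prod.mk.inj h
    simp only [abs_lt]
    refine ⟨?_, ?_, ?_, by linarith, by linarith⟩ <;> nlinarith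
  · rintro ⟨hD, hm, hp, hu⟩
    simp only [abs_lt] at hD hm hp hu
    have hr : 0 < √(u ^ 2 - 4 * v) := Real.sqrt_pos.2 hD
    have hrp : √(u ^ 2 - 4 * v) < 2 + u := (Real.sqrt_lt' (by linarith)).2 (by linarith)
    have hrm : √(u ^ 2 - 4 * v) < 2 - u := (Real.sqrt_lt' (by linarith)).2 (by linarith)
    refine ⟨xRoot (u, v), yRoot (u, v), ?_⟩
    simp only [xRoot, yRoot, Prod.mk.injEq]
    refine ⟨by linarith, by linarith, by linarith, by ring, ?_⟩
    linarith [Real.sq_sqrt hD.le]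

lemma image_symMap_triDom : symMap '' triDom = omegaDom := by
  ext q
  constructor
  · rintro ⟨⟨x, y⟩, ⟨hx, hxy, hy⟩, rfl⟩
    exact ⟨x, y, hx, hxy, hy, rfl⟩
  · rintro ⟨x, y, hx, hxy, hy, rfl⟩
    exact ⟨(x, y), ⟨hx, hxy, hy⟩, rfl⟩

lemma injOn_symMap_triDom : InjOn symMap triDom := by
  rintro ⟨x, y⟩ ⟨-, h, -⟩ ⟨x', y'⟩ ⟨-, h', -⟩ he
  simp only [symMap, Prod.mk.injEq] at he h h' ⊢
  have hsub : y - x = y' - x' := by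
    rw [← sq_eq_sq₀ (by linarith) (by linarith)]
    linear_combination (x + y + x' + y') * he.1 - 4 * he.2
  constructor <;> linarith [he.1]

lemma image_quadMap_quarterDom : quadMap '' quarterDom = omegaDom := by
  ext q
  rw [mem_omegaDom_iff]
  constructor
  · rintro ⟨⟨x, y⟩, ⟨hxy, hyx, hy⟩, rfl⟩
    simp only [quadMap, abs_lt] at hxy hyx hy ⊢
    have hx2 : 0 < 1 - x ^ 2 := by nlinarith
    have hy2 : 0 < 1 - y ^ 2 := by nlinarith
    refine ⟨?_, ?_, ?_, by nlinarith, by nlinarith⟩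
    · linarith [mul_pos hx2 hy2]
    · linarith [pow_pos (sub_pos.2 hxy) 2]
    · linarith [pow_pos hyx 2]
  · obtain ⟨u, v⟩ := q
    rintro ⟨hD, hm, hp, hu⟩
    simp only [abs_lt] at hD hm hp hu
    have hA := Real.sqrt_pos.2 hp
    have hB := Real.sqrt_pos.2 hm
    have hA2 := Real.sq_sqrt hp.le
    have hB2 := Real.sq_sqrt hm.le
    set A := √(1 + u + v)
    set B := √(1 - u + v)
    have hAB : A * B < 1 - v := by
      refine lt_of_pow_lt_pow_left₀ 2 (by nlinarith) ?_
      rw [mul_pow, hA2, hB2]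
      linarith
    have hAB2 : A + B < 2 := lt_of_pow_lt_pow_left₀ 2 two_pos.le (by linarith)
    refine ⟨((A - B) / 2, (A + B) / 2), ⟨?_, ?_, ?_⟩, Prod.ext ?_ ?_⟩ <;>
      simp only [quadMap] <;> linarith

lemma injOn_quadMap_quarterDom : InjOn quadMap quarterDom := by
  rintro ⟨x, y⟩ ⟨h, h₂, -⟩ ⟨x', y'⟩ ⟨h', h₂', -⟩ he
  simp only [quadMap, Prod.mk.injEq] at he h h' h₂ h₂' ⊢
  have hsub : y - x = y' - x' := by
    rw [← sq_eq_sq₀ (by linarith) (by linarith)]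
    linear_combination he.2 - he.1
  have hadd : x + y = x' + y' := by
    rw [← sq_eq_sq₀ h₂.le h₂'.le]
    linear_combination he.2 + he.1
  constructor <;> linarith

end Domains

section ChangeOfVariables

lemma det_toLin_finTwoProd (a b c d : ℝ) :
    ((Matrix.toLin (.finTwoProd ℝ) (.finTwoProd ℝ) !![a, b; c, d]).toContinuousLinearMap).det =
      a * d - b * c := by
  rw [LinearMap.det_toContinuousLinearMap, LinearMap.det_toLin, Matrix.det_fin_two_of]

lemma hasFDerivAt_symMap (q : ℝ × ℝ) : HasFDerivAt symMap
    (Matrix.toLin (.finTwoProd ℝ) (.finTwoProd ℝ) !![1, 1; q.2, q.1]).toContinuousLinearMap q := by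
  rw [Matrix.toLin_finTwoProd_toContinuousLinearMap]
  convert! HasFDerivAt.prodMk (𝕜 := ℝ) (hasFDerivAt_fst.add hasFDerivAt_snd)
    ((hasFDerivAt_fst (𝕜 := ℝ) (p := q)).mul hasFDerivAt_snd) using 2
  · simp
  · ext <;> simp

lemma hasFDerivAt_quadMap (q : ℝ × ℝ) : HasFDerivAt quadMap
    (Matrix.toLin (.finTwoProd ℝ) (.finTwoProd ℝ)
      !![2 * q.2, 2 * q.1; 2 * q.1, 2 * q.2]).toContinuousLinearMap q := by
  rw [Matrix.toLin_finTwoProd_toContinuousLinearMap]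
  convert! HasFDerivAt.prodMk (𝕜 := ℝ)
    (((hasFDerivAt_fst (𝕜 := ℝ) (p := q)).const_mul (2 : ℝ)).mul hasFDerivAt_snd)
    ((((hasFDerivAt_fst (𝕜 := ℝ) (p := q)).pow 2).add
      ((hasFDerivAt_snd (𝕜 := ℝ) (p := q)).pow 2)).sub_const 1) using 2
  · ext <;> simp [mul_comm]
  · ext <;> simp

lemma symMap_diagReflection (q : ℝ × ℝ) : symMap (diagReflection q) = symMap q :=
  Prod.ext (add_comm _ _) (mul_comm _ _)

lemma quadMap_diagReflection (q : ℝ × ℝ) : quadMap (diagReflection q) = quadMap q := by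
  simp only [quadMap, diagReflection_apply, Prod.mk.injEq]
  exact ⟨by ring, by ring⟩

lemma quadMap_antidiagReflection (q : ℝ × ℝ) : quadMap (antidiagReflection q) = quadMap q := by
  simp only [quadMap, antidiagReflection_apply, Prod.mk.injEq]
  exact ⟨by ring, by ring⟩

variable {E : Type*} [NormedAddCommGroup E] [NormedSpace ℝ E] (G : ℝ × ℝ → E)

lemma abs_sub_smul_symMap_diagReflection (q : ℝ × ℝ) :
    |(diagReflection q).1 - (diagReflection q).2| • G (symMap (diagReflection q)) =
      |q.1 - q.2| • G (symMap q) := by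
  rw [symMap_diagReflection, diagReflection_apply, abs_sub_comm]

lemma integrableOn_abs_sub_smul_symMap_iff :
    IntegrableOn (fun q => |q.1 - q.2| • G (symMap q)) sqDom ↔ IntegrableOn G omegaDom := by
  rw [integrableOn_iff_of_ae_eq_union_preimage measurePreserving_diagReflection
      (abs_sub_smul_symMap_diagReflection G) sqDom_ae_eq_triDom_union,
    ← image_symMap_triDom, integrableOn_image_iff_integrableOn_abs_det_fderiv_smul volume
      measurableSet_triDom (fun q _ => (hasFDerivAt_symMap q).hasFDerivWithinAt)
      injOn_symMap_triDom]
  simp only [det_toLin_finTwoProd, one_mul]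

lemma integral_abs_sub_smul_symMap :
    ∫ q in sqDom, |q.1 - q.2| • G (symMap q) = (2 : ℝ) • ∫ q in omegaDom, G q := by
  rw [setIntegral_eq_two_smul_of_ae_eq_union_preimage measurePreserving_diagReflection
      (abs_sub_smul_symMap_diagReflection G) measurableSet_triDom disjoint_triDom_diagReflection
      sqDom_ae_eq_triDom_union,
    ← image_symMap_triDom, integral_image_eq_integral_abs_det_fderiv_smul volume
      measurableSet_triDom (fun q _ => (hasFDerivAt_symMap q).hasFDerivWithinAt)
      injOn_symMap_triDom]
  simp only [det_toLin_finTwoProd, one_mul]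

lemma abs_sq_sub_sq_smul_quadMap_diagReflection (q : ℝ × ℝ) :
    |(diagReflection q).1 ^ 2 - (diagReflection q).2 ^ 2| • G (quadMap (diagReflection q)) =
      |q.1 ^ 2 - q.2 ^ 2| • G (quadMap q) := by
  rw [quadMap_diagReflection, diagReflection_apply, abs_sub_comm]

lemma abs_sq_sub_sq_smul_quadMap_antidiagReflection (q : ℝ × ℝ) :
    |(antidiagReflection q).1 ^ 2 - (antidiagReflection q).2 ^ 2| •
        G (quadMap (antidiagReflection q)) = |q.1 ^ 2 - q.2 ^ 2| • G (quadMap q) := by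
  rw [quadMap_antidiagReflection, antidiagReflection_apply, neg_sq, neg_sq, abs_sub_comm]

lemma abs_det_fderiv_quadMap (q : ℝ × ℝ) :
    |(Matrix.toLin (.finTwoProd ℝ) (.finTwoProd ℝ)
      !![2 * q.2, 2 * q.1; 2 * q.1, 2 * q.2]).toContinuousLinearMap.det| =
      4 * |q.1 ^ 2 - q.2 ^ 2| := by
  have h : 2 * q.1 * (2 * q.1) - 2 * q.2 * (2 * q.2) = 4 * (q.1 ^ 2 - q.2 ^ 2) := by ring
  rw [det_toLin_finTwoProd, abs_sub_comm, h, abs_mul, abs_of_pos four_pos]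

lemma integrableOn_abs_sq_sub_sq_smul_quadMap_iff :
    IntegrableOn (fun q => |q.1 ^ 2 - q.2 ^ 2| • G (quadMap q)) sqDom ↔
      IntegrableOn G omegaDom := by
  rw [integrableOn_iff_of_ae_eq_union_preimage measurePreserving_diagReflection
      (abs_sq_sub_sq_smul_quadMap_diagReflection G) sqDom_ae_eq_triDom_union,
    integrableOn_iff_of_ae_eq_union_preimage measurePreserving_antidiagReflection
      (abs_sq_sub_sq_smul_quadMap_antidiagReflection G) triDom_ae_eq_quarterDom_union,
    ← image_quadMap_quarterDom, integrableOn_image_iff_integrableOn_abs_det_fderiv_smul volume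
      measurableSet_quarterDom (fun q _ => (hasFDerivAt_quadMap q).hasFDerivWithinAt)
      injOn_quadMap_quarterDom]
  simp only [abs_det_fderiv_quadMap, mul_smul]
  exact (integrable_smul_iff four_ne_zero _).symm

lemma integral_abs_sq_sub_sq_smul_quadMap :
    ∫ q in sqDom, |q.1 ^ 2 - q.2 ^ 2| • G (quadMap q) = ∫ q in omegaDom, G q := by
  rw [setIntegral_eq_two_smul_of_ae_eq_union_preimage measurePreserving_diagReflection
      (abs_sq_sub_sq_smul_quadMap_diagReflection G) measurableSet_triDom
      disjoint_triDom_diagReflection sqDom_ae_eq_triDom_union,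
    setIntegral_eq_two_smul_of_ae_eq_union_preimage measurePreserving_antidiagReflection
      (abs_sq_sub_sq_smul_quadMap_antidiagReflection G) measurableSet_quarterDom
      disjoint_quarterDom_antidiagReflection triDom_ae_eq_quarterDom_union,
    ← image_quadMap_quarterDom, integral_image_eq_integral_abs_det_fderiv_smul volume
      measurableSet_quarterDom (fun q _ => (hasFDerivAt_quadMap q).hasFDerivWithinAt)
      injOn_quadMap_quarterDom]
  simp only [abs_det_fderiv_quadMap, mul_smul, integral_smul]
  rw [smul_smul, two_mul, two_add_two_eq_four]

end ChangeOfVariables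

section Weights

lemma sqrt_discrim_symMap (q : ℝ × ℝ) :
    √((symMap q).1 ^ 2 - 4 * (symMap q).2) = |q.1 - q.2| := by
  rw [← Real.sqrt_sq_eq_abs, symMap]
  ring_nf

lemma xRoot_symMap (q : ℝ × ℝ) : xRoot (symMap q) = min q.1 q.2 := by
  rw [xRoot, sqrt_discrim_symMap, symMap]
  linarith [min_add_max q.1 q.2, max_sub_min_eq_abs' q.1 q.2]

lemma yRoot_symMap (q : ℝ × ℝ) : yRoot (symMap q) = max q.1 q.2 := by
  rw [yRoot, sqrt_discrim_symMap, symMap]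
  linarith [min_add_max q.1 q.2, max_sub_min_eq_abs' q.1 q.2]

lemma xRoot_add_yRoot (q : ℝ × ℝ) : xRoot q + yRoot q = q.1 := by
  rw [xRoot, yRoot]
  ring

lemma xRoot_mul_yRoot {q : ℝ × ℝ} (hq : 0 ≤ q.1 ^ 2 - 4 * q.2) : xRoot q * yRoot q = q.2 := by
  rw [xRoot, yRoot]
  linear_combination -(1 / 4) * Real.sq_sqrt hq

lemma discrim_quadMap (q : ℝ × ℝ) :
    (quadMap q).1 ^ 2 - 4 * (quadMap q).2 = 4 * (1 - q.1 ^ 2) * (1 - q.2 ^ 2) := by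
  rw [quadMap]
  ring

/-- The weight `w(x) w(y) (u ^ 2 - 4 v) ^ (-1/2)` at `(u, v) = (x + y, x y)`. -/
def omegaWeight (w : ℝ → ℝ) (q : ℝ × ℝ) : ℝ :=
  w (xRoot q) * w (yRoot q) / √(q.1 ^ 2 - 4 * q.2)

/-- The weight on the square `[-1, 1] ^ 2` that `quadMap` transports to `omegaWeight w`. -/
def squareWeight (w : ℝ → ℝ) (q : ℝ × ℝ) : ℝ :=
  |q.1 ^ 2 - q.2 ^ 2| * omegaWeight w (quadMap q)

variable (w : ℝ → ℝ)

lemma abs_sub_mul_omegaWeight_symMap {q : ℝ × ℝ} (hq : q.1 ≠ q.2) :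
    |q.1 - q.2| * omegaWeight w (symMap q) = w q.1 * w q.2 := by
  rw [omegaWeight, sqrt_discrim_symMap, xRoot_symMap, yRoot_symMap,
    mul_div_cancel₀ _ (abs_ne_zero.2 (sub_ne_zero.2 hq)), fn_min_mul_fn_max]

lemma abs_sub_mul_omegaWeight_symMap_ae_eq :
    (fun q => |q.1 - q.2| * omegaWeight w (symMap q)) =ᵐ[volume] fun q => w q.1 * w q.2 :=
  (ae_fst_ne_mul_snd 1).mono fun q hq =>
    abs_sub_mul_omegaWeight_symMap w (by rwa [one_mul] at hq)

lemma two_mul_integral_mul_omegaWeight (h : ℝ × ℝ → ℝ) :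
    2 * ∫ q in omegaDom, h q * omegaWeight w q =
      ∫ q in sqDom, h (symMap q) * (w q.1 * w q.2) := by
  rw [← smul_eq_mul, ← integral_abs_sub_smul_symMap]
  refine integral_congr_ae (ae_restrict_of_ae ?_)
  filter_upwards [abs_sub_mul_omegaWeight_symMap_ae_eq w] with q hq
  rw [smul_eq_mul, mul_left_comm, hq]

lemma integral_mul_squareWeight (h : ℝ × ℝ → ℝ) :
    ∫ q in sqDom, h (quadMap q) * squareWeight w q = ∫ q in omegaDom, h q * omegaWeight w q := by
  simp only [← integral_abs_sq_sub_sq_smul_quadMap, squareWeight, smul_eq_mul, mul_left_comm]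

lemma integral_mul_two_mul_squareWeight (h : ℝ × ℝ → ℝ) :
    ∫ q in sqDom, h (quadMap q) * (2 * squareWeight w q) =
      ∫ q in sqDom, h (symMap q) * (w q.1 * w q.2) := by
  simp only [mul_left_comm _ (2 : ℝ), integral_const_mul, integral_mul_squareWeight,
    two_mul_integral_mul_omegaWeight]

variable {w}

lemma integrableOn_squareWeight (hw : IntegrableOn w (Icc (-1) 1)) :
    IntegrableOn (squareWeight w) sqDom := by
  have hprod : IntegrableOn (fun q : ℝ × ℝ => w q.1 * w q.2) sqDom := by
    have h := Integrable.mul_prod hw hw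
    rwa [Measure.prod_restrict] at h
  exact (integrableOn_abs_sq_sub_sq_smul_quadMap_iff _).2 <|
    (integrableOn_abs_sub_smul_symMap_iff _).1 <|
      hprod.congr (ae_restrict_of_ae (abs_sub_mul_omegaWeight_symMap_ae_eq w).symm)

variable (w)

lemma squareWeight_diagReflection (q : ℝ × ℝ) :
    squareWeight w (diagReflection q) = squareWeight w q :=
  abs_sq_sub_sq_smul_quadMap_diagReflection (omegaWeight w) q

lemma squareWeight_antidiagReflection (q : ℝ × ℝ) :
    squareWeight w (antidiagReflection q) = squareWeight w q :=
  abs_sq_sub_sq_smul_quadMap_antidiagReflection (omegaWeight w) q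

/-- The weight `(1 - x) ^ i (1 + x) ^ j w(x)`. -/
def modWeight (i j : ℕ) (w : ℝ → ℝ) (x : ℝ) : ℝ := (1 - x) ^ i * (1 + x) ^ j * w x

lemma squareWeight_const_mul_modWeight (c : ℝ) (i j : ℕ) {q : ℝ × ℝ} (hq : q ∈ sqDom) :
    squareWeight (fun x => c * modWeight i j w x) q =
      (c * ((q.1 - q.2) ^ i * (q.1 + q.2) ^ j)) ^ 2 * squareWeight w q := by
  obtain ⟨⟨hx, hx'⟩, hy, hy'⟩ := hq
  have hdiscrim : 0 ≤ (quadMap q).1 ^ 2 - 4 * (quadMap q).2 := by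
    rw [discrim_quadMap]
    exact mul_nonneg (by nlinarith) (by nlinarith)
  have hadd : xRoot (quadMap q) + yRoot (quadMap q) = 2 * q.1 * q.2 := xRoot_add_yRoot _
  have hmul : xRoot (quadMap q) * yRoot (quadMap q) = q.1 ^ 2 + q.2 ^ 2 - 1 :=
    xRoot_mul_yRoot hdiscrim
  have hm : (1 - xRoot (quadMap q)) * (1 - yRoot (quadMap q)) = (q.1 - q.2) ^ 2 := by
    linear_combination hmul - hadd
  have hp : (1 + xRoot (quadMap q)) * (1 + yRoot (quadMap q)) = (q.1 + q.2) ^ 2 := by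
    linear_combination hmul + hadd
  simp only [squareWeight, omegaWeight, modWeight]
  calc _ = c ^ 2 * (((1 - xRoot (quadMap q)) * (1 - yRoot (quadMap q))) ^ i *
          ((1 + xRoot (quadMap q)) * (1 + yRoot (quadMap q))) ^ j) *
        (|q.1 ^ 2 - q.2 ^ 2| * (w (xRoot (quadMap q)) * w (yRoot (quadMap q)) /
          √((quadMap q).1 ^ 2 - 4 * (quadMap q).2))) := by
        simp only [mul_pow]
        ring
    _ = _ := by rw [hm, hp, pow_right_comm, pow_right_comm _ 2 j, mul_pow, mul_pow]

end Weights

section SymmetricOrthonormality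

open Polynomial

variable {w : ℝ → ℝ} {p : ℕ → ℝ[X]}

lemma IsONPS.integrableOn (hp : IsONPS w p) : IntegrableOn w (Icc (-1) 1) := by
  obtain ⟨a, ha⟩ := natDegree_eq_zero.1 (hp.1 0)
  have h : ∫ x in Icc (-1 : ℝ) 1, a * a * w x = 1 := by
    simpa only [← ha, eval_C, if_true] using hp.2.2 0 0
  have ha0 : a * a ≠ 0 := fun h0 => by simp [h0] at h
  exact (integrable_const_mul_iff (IsUnit.mk0 _ ha0) w).1
    (Integrable.of_integral_ne_zero (h.trans_ne one_ne_zero))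

/-- The inner product `∫ f g w` over `[-1, 1]` of one-variable polynomials. -/
def weightInner (w : ℝ → ℝ) (f g : ℝ[X]) : ℝ := ∫ x in Icc (-1 : ℝ) 1, f.eval x * g.eval x * w x

lemma integral_symmetrization_mul_symmetrization (hw : IntegrableOn w (Icc (-1) 1))
    (f g f' g' : ℝ[X]) :
    ∫ q in sqDom, (f.eval q.1 * g.eval q.2 + g.eval q.1 * f.eval q.2) *
        (f'.eval q.1 * g'.eval q.2 + g'.eval q.1 * f'.eval q.2) * (w q.1 * w q.2) =
      2 * (weightInner w f f' * weightInner w g g' +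
        weightInner w f g' * weightInner w g f') := by
  let T (f f' g g' : ℝ[X]) (q : ℝ × ℝ) : ℝ :=
    (f.eval q.1 * f'.eval q.1 * w q.1) * (g.eval q.2 * g'.eval q.2 * w q.2)
  have hw_mul : ∀ f g : ℝ[X], IntegrableOn (fun x => f.eval x * g.eval x * w x) (Icc (-1) 1) :=
    fun f g => hw.continuousOn_mul (f.continuous.mul g.continuous).continuousOn isCompact_Icc
  have hT : ∀ f f' g g', IntegrableOn (T f f' g g') sqDom := fun f f' g g' => by
    have h := Integrable.mul_prod (hw_mul f f') (hw_mul g g')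
    rwa [Measure.prod_restrict] at h
  have hT_eq : ∀ f f' g g', ∫ q in sqDom, T f f' g g' q =
      weightInner w f f' * weightInner w g g' := fun f f' g g' =>
    setIntegral_prod_mul (fun x => f.eval x * f'.eval x * w x) (fun x => g.eval x * g'.eval x * w x)
      (Icc (-1) 1) (Icc (-1) 1)
  calc _ = ∫ q in sqDom,
        ((T f f' g g' + T f g' g f') + (T g f' f g' + T g g' f f')) q := by
        refine integral_congr_ae (ae_of_all _ fun q => ?_)
        simp only [T, Pi.add_apply]
        ring
    _ = (weightInner w f f' * weightInner w g g' + weightInner w f g' * weightInner w g f') +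
        (weightInner w g f' * weightInner w f g' + weightInner w g g' * weightInner w f f') := by
        simp only [integral_add' ((hT _ _ _ _).add (hT _ _ _ _)) ((hT _ _ _ _).add (hT _ _ _ _)),
          integral_add' (hT _ _ _ _) (hT _ _ _ _), hT_eq]
    _ = _ := by ring

/-- The factor normalizing `p_n(x) p_k(y) + p_k(x) p_n(y)`. -/
def symCoeff (n k : ℕ) : ℝ := if k = n then 1 / 2 else (√2)⁻¹

lemma symCoeff_mul_symCoeff {n k m l : ℕ} (hk : k ≤ n) (hl : l ≤ m) :
    symCoeff n k * symCoeff m l * (2 * ((if n = m then 1 else 0) * (if k = l then 1 else 0) +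
      (if n = l then 1 else 0) * (if k = m then 1 else 0))) =
        if n = m ∧ k = l then (1 : ℝ) else 0 := by
  by_cases h : n = m ∧ k = l
  · obtain ⟨rfl, rfl⟩ := h
    have h2 : (√2)⁻¹ * (√2)⁻¹ = (1 / 2 : ℝ) := by
      rw [← mul_inv, Real.mul_self_sqrt zero_le_two, one_div]
    rcases eq_or_ne k n with rfl | hkn
    · simp only [symCoeff, if_true, and_self]
      norm_num
    · simp only [symCoeff, hkn, hkn.symm, if_true, if_false, and_self, h2]
      norm_num
  · have h' : ¬(n = l ∧ k = m) := by omega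
    simp only [ite_zero_mul_ite_zero, mul_one, if_neg h, if_neg h', add_zero, mul_zero]

/-- Koornwinder's orthonormal polynomials on `Ω`, of degree `n` and index `k ≤ n`, for the weight
`omegaWeight w`, where `p` is orthonormal with respect to `w`. -/
def koornwinderPoly (p : ℕ → ℝ[X]) (n k : ℕ) : MvPolynomial (Fin 2) ℝ :=
  symCoeff n k • symmProd (p n) (p k)

lemma evalP_koornwinderPoly_symMap (p : ℕ → ℝ[X]) (n k : ℕ) (q : ℝ × ℝ) :
    evalP (koornwinderPoly p n k) (symMap q) = symCoeff n k *
      ((p n).eval q.1 * (p k).eval q.2 + (p k).eval q.1 * (p n).eval q.2) := by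
  rw [koornwinderPoly, evalP_smul, symMap, evalP_symmProd]

lemma integral_koornwinderPoly_mul_koornwinderPoly (hp : IsONPS w p) {n k m l : ℕ}
    (hk : k ≤ n) (hl : l ≤ m) :
    ∫ q in sqDom, evalP (koornwinderPoly p n k) (quadMap q) *
        evalP (koornwinderPoly p m l) (quadMap q) * (2 * squareWeight w q) =
      if n = m ∧ k = l then 1 else 0 := by
  have hinner : ∀ n m, weightInner w (p n) (p m) = if n = m then 1 else 0 := hp.2.2
  rw [← symCoeff_mul_symCoeff hk hl, ← hinner n m, ← hinner k l, ← hinner n l, ← hinner k m,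
    ← integral_symmetrization_mul_symmetrization hp.integrableOn, ← integral_const_mul,
    integral_mul_two_mul_squareWeight w fun q =>
      evalP (koornwinderPoly p n k) q * evalP (koornwinderPoly p m l) q]
  refine integral_congr_ae (ae_of_all _ fun q => ?_)
  simp only [evalP_koornwinderPoly_symMap]
  ring

end SymmetricOrthonormality

section SquareBasis

open Polynomial

/-- The polynomials `b (x - y) ^ i (x + y) ^ j K (2 x y, x ^ 2 + y ^ 2 - 1)` on the square, of
degree `i + j + 2 n`, where `K` is a Koornwinder polynomial. -/
def squarePoly (b : ℝ) (p : ℕ → ℝ[X]) (i j n k : ℕ) : MvPolynomial (Fin 2) ℝ :=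
  b • ((.X 0 - .X 1) ^ i * (.X 0 + .X 1) ^ j * quadSub (koornwinderPoly p n k))

lemma evalP_squarePoly (b : ℝ) (p : ℕ → ℝ[X]) (i j n k : ℕ) (q : ℝ × ℝ) :
    evalP (squarePoly b p i j n k) q = b * ((q.1 - q.2) ^ i * (q.1 + q.2) ^ j) *
      evalP (koornwinderPoly p n k) (quadMap q) := by
  rw [squarePoly, evalP_smul, evalP_mul, evalP_quadSub, ← mul_assoc]
  simp [evalP]

lemma totalDegree_squarePoly_le (b : ℝ) {p : ℕ → ℝ[X]} (hp : ∀ n, (p n).natDegree = n)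
    (i j : ℕ) {n k : ℕ} (hk : k ≤ n) : (squarePoly b p i j n k).totalDegree ≤ i + j + 2 * n := by
  have hsub : (.X 0 - .X 1 : MvPolynomial (Fin 2) ℝ).totalDegree ≤ 1 :=
    (MvPolynomial.totalDegree_sub _ _).trans (by simp)
  have hadd : (.X 0 + .X 1 : MvPolynomial (Fin 2) ℝ).totalDegree ≤ 1 :=
    (MvPolynomial.totalDegree_add _ _).trans (by simp)
  have hsymm : (koornwinderPoly p n k).totalDegree ≤ n :=
    (MvPolynomial.totalDegree_smul_le _ _).trans <| (totalDegree_symmProd_le _ _).trans <| by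
      rw [hp, hp, max_eq_left hk]
  calc (squarePoly b p i j n k).totalDegree
      ≤ i * 1 + j * 1 + 2 * n := (MvPolynomial.totalDegree_smul_le _ _).trans <|
        (MvPolynomial.totalDegree_mul _ _).trans <| add_le_add
          ((MvPolynomial.totalDegree_mul _ _).trans <| add_le_add
            ((MvPolynomial.totalDegree_pow _ _).trans (Nat.mul_le_mul_left i hsub))
            ((MvPolynomial.totalDegree_pow _ _).trans (Nat.mul_le_mul_left j hadd)))
          ((totalDegree_quadSub_le _).trans (Nat.mul_le_mul_left 2 hsymm))
    _ = i + j + 2 * n := by rw [mul_one, mul_one]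

variable {w : ℝ → ℝ}

lemma integral_squarePoly_mul_squarePoly {b : ℝ} {p : ℕ → ℝ[X]} {i j : ℕ}
    (hp : IsONPS (fun x => b * modWeight i j w x) p) {n k m l : ℕ} (hk : k ≤ n) (hl : l ≤ m) :
    ∫ q in sqDom, evalP (squarePoly b p i j n k) q * evalP (squarePoly b p i j m l) q *
      (2 * squareWeight w q) = if n = m ∧ k = l then 1 else 0 := by
  rw [← integral_koornwinderPoly_mul_koornwinderPoly hp hk hl]
  refine setIntegral_congr_fun (measurableSet_Icc.prod measurableSet_Icc) fun q hq => ?_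
  simp only [evalP_squarePoly, squareWeight_const_mul_modWeight w b i j hq]
  ring

lemma integral_squarePoly_mul_squarePoly_of_odd_left (b b' : ℝ) (p p' : ℕ → ℝ[X]) {i i' : ℕ}
    (h : Odd (i + i')) (j j' n k m l : ℕ) :
    ∫ q in sqDom, evalP (squarePoly b p i j n k) q * evalP (squarePoly b' p' i' j' m l) q *
      (2 * squareWeight w q) = 0 := by
  refine setIntegral_eq_zero_of_odd measurePreserving_diagReflection
    preimage_diagReflection_sqDom fun q => ?_
  have hsign : (q.2 - q.1) ^ i * (q.2 - q.1) ^ i' = -((q.1 - q.2) ^ i * (q.1 - q.2) ^ i') := by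
    rw [← pow_add, ← pow_add, ← neg_sub, h.neg_pow]
  simp only [evalP_squarePoly, quadMap_diagReflection, squareWeight_diagReflection]
  simp only [diagReflection_apply, add_comm q.2]
  linear_combination (2 * b * b' * (q.1 + q.2) ^ j * (q.1 + q.2) ^ j' * squareWeight w q *
    evalP (koornwinderPoly p n k) (quadMap q) *
    evalP (koornwinderPoly p' m l) (quadMap q)) * hsign

lemma integral_squarePoly_mul_squarePoly_of_odd_right (b b' : ℝ) (p p' : ℕ → ℝ[X]) {j j' : ℕ}
    (h : Odd (j + j')) (i i' n k m l : ℕ) :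
    ∫ q in sqDom, evalP (squarePoly b p i j n k) q * evalP (squarePoly b' p' i' j' m l) q *
      (2 * squareWeight w q) = 0 := by
  refine setIntegral_eq_zero_of_odd measurePreserving_antidiagReflection
    preimage_antidiagReflection_sqDom fun q => ?_
  have hsign : (-q.2 + -q.1) ^ j * (-q.2 + -q.1) ^ j' =
      -((q.1 + q.2) ^ j * (q.1 + q.2) ^ j') := by
    rw [← pow_add, ← pow_add, ← neg_add_rev, h.neg_pow]
  simp only [evalP_squarePoly, quadMap_antidiagReflection, squareWeight_antidiagReflection]
  simp only [antidiagReflection_apply, neg_sub_neg]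
  linear_combination (2 * b * b' * (q.1 - q.2) ^ i * (q.1 - q.2) ^ i' * squareWeight w q *
    evalP (koornwinderPoly p n k) (quadMap q) *
    evalP (koornwinderPoly p' m l) (quadMap q)) * hsign

/-- The candidate orthonormal basis of `V_N` on the square, indexed by `k ≤ N`: the parities
`(i, j)` of the factor `(x - y) ^ i (x + y) ^ j` are those with `i + j ≡ N` modulo `2`, first
`i = 0` and then `i = 1`. -/
def squareBasis (b : Fin 2 → Fin 2 → ℝ) (p : Fin 2 → Fin 2 → ℕ → ℝ[X]) (N k : ℕ) :
    MvPolynomial (Fin 2) ℝ :=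
  let E (i j : Fin 2) : ℕ → ℕ → MvPolynomial (Fin 2) ℝ := squarePoly (b i j) (p i j) i j
  if k ≤ N / 2 then E 0 (Fin.ofNat 2 N) (N / 2) k
  else E 1 (Fin.ofNat 2 (N + 1)) ((N - 1) / 2) (k - N / 2 - 1)

variable {b : Fin 2 → Fin 2 → ℝ} {p : Fin 2 → Fin 2 → ℕ → ℝ[X]}

lemma totalDegree_squareBasis_le (hp : ∀ i j n, (p i j n).natDegree = n) {N k : ℕ} (hk : k ≤ N) :
    (squareBasis b p N k).totalDegree ≤ N := by
  simp only [squareBasis]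
  split_ifs with h
  · refine (totalDegree_squarePoly_le _ (hp _ _) _ _ h).trans ?_
    simp only [Fin.val_ofNat, Fin.val_zero]
    omega
  · refine (totalDegree_squarePoly_le _ (hp _ _) _ _ (by omega)).trans ?_
    simp only [Fin.val_ofNat, Fin.val_one]
    omega

lemma integral_squarePoly_mul_squarePoly_fin_two
    (hp : ∀ i j, IsONPS (fun x => b i j * modWeight i j w x) (p i j)) (i j i' j' : Fin 2)
    {n k m l : ℕ} (hk : k ≤ n) (hl : l ≤ m) :
    ∫ q in sqDom, evalP (squarePoly (b i j) (p i j) i j n k) q *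
      evalP (squarePoly (b i' j') (p i' j') i' j' m l) q * (2 * squareWeight w q) =
        if i = i' ∧ j = j' ∧ n = m ∧ k = l then 1 else 0 := by
  have odd_add : ∀ i i' : Fin 2, i ≠ i' → Odd (i + i' : ℕ) := by decide
  by_cases hi : i = i'
  · by_cases hj : j = j'
    · subst hi hj
      simpa only [true_and] using integral_squarePoly_mul_squarePoly (hp i j) hk hl
    · rw [if_neg fun h => hj h.2.1]
      exact integral_squarePoly_mul_squarePoly_of_odd_right _ _ _ _ (odd_add j j' hj) ..
  · rw [if_neg fun h => hi h.1]
    exact integral_squarePoly_mul_squarePoly_of_odd_left _ _ _ _ (odd_add i i' hi) ..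

lemma integral_squareBasis_mul_squareBasis
    (hp : ∀ i j, IsONPS (fun x => b i j * modWeight i j w x) (p i j))
    {N k M l : ℕ} (hk : k ≤ N) (hl : l ≤ M) :
    ∫ q in sqDom, evalP (squareBasis b p N k) q * evalP (squareBasis b p M l) q *
      (2 * squareWeight w q) = if N = M ∧ k = l then 1 else 0 := by
  simp only [squareBasis]
  split_ifs <;> rw [integral_squarePoly_mul_squarePoly_fin_two hp _ _ _ _ (by omega) (by omega)] <;>
    simp only [Fin.ext_iff, Fin.val_ofNat, Fin.val_zero, Fin.val_one] <;> grind

theorem isONBVn_squareBasis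
    (hp : ∀ i j : Fin 2, IsONPS (fun x => b i j * modWeight i j w x) (p i j)) (N : ℕ) :
    isONBVn sqDom (fun q => 2 * squareWeight w q) N (squareBasis b p N) := by
  have hb : b 0 0 ≠ 0 := fun h => by simpa [h] using (hp 0 0).2.2 0 0
  have hw : IntegrableOn w (Icc (-1) 1) :=
    (integrable_const_mul_iff (IsUnit.mk0 _ hb) w).1 <| by
      simpa [modWeight] using (hp 0 0).integrableOn.integrable
  exact isONBVn_of_orthonormal (isCompact_Icc.prod isCompact_Icc)
    ((integrableOn_squareWeight hw).const_mul 2)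
    (fun _ _ => totalDegree_squareBasis_le fun i j => (hp i j).1)
    (fun _ _ _ _ => integral_squareBasis_mul_squareBasis hp) N

end SquareBasis

section Evaluation

open Polynomial

lemma quadMap_cos (θ φ : ℝ) : quadMap (cos θ, cos φ) = symMap (cos (θ - φ), cos (θ + φ)) := by
  simp only [quadMap, symMap, cos_sub, cos_add, Prod.mk.injEq]
  constructor
  · ring
  · linear_combination (1 - cos φ ^ 2) * sin_sq_add_cos_sq θ + sin θ ^ 2 * sin_sq_add_cos_sq φ

lemma evalP_squarePoly_cos (b : ℝ) (p : ℕ → ℝ[X]) (i j : ℕ) {n k : ℕ} (hk : k < n) (θ φ : ℝ) :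
    evalP (squarePoly b p i j n k) (cos θ, cos φ) =
      b * (√2)⁻¹ * ((cos θ + cos φ) ^ j * (cos θ - cos φ) ^ i) *
        ((p n).eval (cos (θ - φ)) * (p k).eval (cos (θ + φ)) +
          (p k).eval (cos (θ - φ)) * (p n).eval (cos (θ + φ))) := by
  rw [evalP_squarePoly, quadMap_cos, evalP_koornwinderPoly_symMap, symCoeff, if_neg hk.ne]
  ring

lemma evalP_squarePoly_self_cos (b : ℝ) (p : ℕ → ℝ[X]) (i j n : ℕ) (θ φ : ℝ) :
    evalP (squarePoly b p i j n n) (cos θ, cos φ) =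
      b * ((cos θ + cos φ) ^ j * (cos θ - cos φ) ^ i) *
        (p n).eval (cos (θ - φ)) * (p n).eval (cos (θ + φ)) := by
  rw [evalP_squarePoly, quadMap_cos, evalP_koornwinderPoly_symMap, symCoeff, if_pos rfl]
  ring

variable (b : Fin 2 → Fin 2 → ℝ) (p : Fin 2 → Fin 2 → ℕ → ℝ[X])

lemma squareBasis_two_mul {n k : ℕ} (hk : k ≤ n) :
    squareBasis b p (2 * n) k = squarePoly (b 0 0) (p 0 0) 0 0 n k := by
  have hN : Fin.ofNat 2 (2 * n) = 0 := by simp [Fin.ext_iff]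
  have h2 : 2 * n / 2 = n := by omega
  simp only [squareBasis, h2, hk, if_true, hN, Fin.val_zero]

lemma squareBasis_two_mul_add (n : ℕ) {m k : ℕ} (hk : k = n + 1 + m) :
    squareBasis b p (2 * n) k = squarePoly (b 1 1) (p 1 1) 1 1 (n - 1) m := by
  have hN : Fin.ofNat 2 (2 * n + 1) = 1 := by simp [Fin.ext_iff]
  have hdiv : 2 * n / 2 = n := by omega
  have hdiv' : (2 * n - 1) / 2 = n - 1 := by omega
  have hkn : ¬k ≤ n := by omega
  have hkm : k - n - 1 = m := by omega
  simp only [squareBasis, hdiv, hdiv', hkn, hkm, if_false, hN, Fin.val_one]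

lemma squareBasis_two_mul_add_one {n k : ℕ} (hk : k ≤ n) :
    squareBasis b p (2 * n + 1) k = squarePoly (b 0 1) (p 0 1) 0 1 n k := by
  have hN : Fin.ofNat 2 (2 * n + 1) = 1 := by simp [Fin.ext_iff]
  have hdiv : (2 * n + 1) / 2 = n := by omega
  simp only [squareBasis, hdiv, hk, if_true, hN, Fin.val_zero, Fin.val_one]

lemma squareBasis_two_mul_add_one_add {n m k : ℕ} (hk : k = n + 1 + m) :
    squareBasis b p (2 * n + 1) k = squarePoly (b 1 0) (p 1 0) 1 0 n m := by
  have hN : Fin.ofNat 2 (2 * n + 1 + 1) = 0 := by simp [Fin.ext_iff, add_assoc]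
  have hdiv : (2 * n + 1) / 2 = n := by omega
  have hdiv' : (2 * n + 1 - 1) / 2 = n := by omega
  have hkn : ¬k ≤ n := by omega
  have hkm : k - n - 1 = m := by omega
  simp only [squareBasis, hdiv, hdiv', hkn, hkm, if_false, hN, Fin.val_zero, Fin.val_one]

end Evaluation

section Jacobi

open Polynomial

/-- The Jacobi weight `c (1 - x) ^ a (1 + x) ^ b`. -/
def jacobiWeight (c a b : ℝ) (x : ℝ) : ℝ := c * (1 - x) ^ a * (1 + x) ^ b

lemma rpow_add_natCast_of_neg_one_lt {x a : ℝ} (hx : 0 ≤ x) (ha : -1 < a) (i : ℕ) :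
    x ^ (a + i) = x ^ a * x ^ i := by
  rcases i.eq_zero_or_pos with rfl | hi
  · simp
  · have : (1 : ℝ) ≤ i := Nat.one_le_cast.2 hi
    exact Real.rpow_add_natCast' hx (by linarith)

lemma IsONPS.congr {w w' : ℝ → ℝ} {p : ℕ → ℝ[X]} (hp : IsONPS w p)
    (h : EqOn w w' (Icc (-1) 1)) : IsONPS w' p :=
  ⟨hp.1, hp.2.1, fun n m => (hp.2.2 n m).symm ▸
    setIntegral_congr_fun measurableSet_Icc fun x hx => by simp only [h hx]⟩

lemma IsONPS.modWeight_jacobiWeight {a b c c' : ℝ} (ha : -1 < a) (hb : -1 < b) (hc : c ≠ 0)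
    {i j : ℕ} {p : ℕ → ℝ[X]} (hp : IsONPS (jacobiWeight c' (a + i) (b + j)) p) :
    IsONPS (fun x => c' / c * modWeight i j (jacobiWeight c a b) x) p := by
  refine hp.congr fun x hx => ?_
  simp only [jacobiWeight, modWeight,
    rpow_add_natCast_of_neg_one_lt (sub_nonneg.2 hx.2) ha,
    rpow_add_natCast_of_neg_one_lt (neg_le_iff_add_nonneg'.1 hx.1) hb]
  field_simp

lemma omegaWeight_jacobiWeight (c a b : ℝ) {q : ℝ × ℝ} (hq : q ∈ omegaDom) :
    omegaWeight (jacobiWeight c a b) q =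
      c ^ 2 * ((1 - q.1 + q.2) ^ a * (1 + q.1 + q.2) ^ b *
        (q.1 ^ 2 - 4 * q.2) ^ (-(1 / 2) : ℝ)) := by
  have hdiscrim := (mem_omegaDom_iff.1 hq).1
  obtain ⟨x, y, hx, hxy, hy, rfl⟩ := hq
  have hxR : xRoot (x + y, x * y) = x := (xRoot_symMap (x, y)).trans (min_eq_left hxy.le)
  have hyR : yRoot (x + y, x * y) = y := (yRoot_symMap (x, y)).trans (max_eq_right hxy.le)
  have hm : 1 - (x + y) + x * y = (1 - x) * (1 - y) := by ring
  have hp : 1 + (x + y) + x * y = (1 + x) * (1 + y) := by ring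
  rw [omegaWeight, hxR, hyR, Real.rpow_neg hdiscrim.le, ← Real.sqrt_eq_rpow]
  simp only [jacobiWeight, hm, hp]
  rw [Real.mul_rpow (by linarith) (by linarith), Real.mul_rpow (by linarith) (by linarith)]
  ring

lemma omegaDom_const_eq_sq {a b c A : ℝ} (hc : ∫ x in Icc (-1 : ℝ) 1, jacobiWeight c a b x = 1)
    (hA : ∫ q in omegaDom, 2 * A * (1 - q.1 + q.2) ^ a * (1 + q.1 + q.2) ^ b *
      (q.1 ^ 2 - 4 * q.2) ^ (-(1 / 2) : ℝ) = 1) : A = c ^ 2 := by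
  have hΩ : MeasurableSet omegaDom := image_symMap_triDom ▸
    measurableSet_triDom.image_of_continuousOn_injOn
      ((continuous_fst.add continuous_snd).prodMk (continuous_fst.mul continuous_snd)).continuousOn
      injOn_symMap_triDom
  have hc0 : c ≠ 0 := fun h => by simp [jacobiWeight, h] at hc
  have hsq : 2 * ∫ q in omegaDom, omegaWeight (jacobiWeight c a b) q = 1 := by
    have h := two_mul_integral_mul_omegaWeight (jacobiWeight c a b) fun _ => 1
    simp only [one_mul] at h
    rw [h, sqDom, Measure.volume_eq_prod, setIntegral_prod_mul, hc, one_mul]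
  have hA' : 2 * (A / c ^ 2) * ∫ q in omegaDom, omegaWeight (jacobiWeight c a b) q = 1 := by
    rw [← hA, ← integral_const_mul]
    refine setIntegral_congr_fun hΩ fun q hq => ?_
    simp only [omegaWeight_jacobiWeight c a b hq]
    field_simp
  have : A / c ^ 2 = 1 := by linear_combination hA' - A / c ^ 2 * hsq
  exact (div_eq_one_iff_eq (pow_ne_zero 2 hc0)).1 this

lemma sqrt_omegaDom_const_div {a b a' b' c c' A A' : ℝ} (hc0 : 0 < c) (hc0' : 0 < c')
    (hc : ∫ x in Icc (-1 : ℝ) 1, jacobiWeight c a b x = 1)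
    (hA : ∫ q in omegaDom, 2 * A * (1 - q.1 + q.2) ^ a * (1 + q.1 + q.2) ^ b *
      (q.1 ^ 2 - 4 * q.2) ^ (-(1 / 2) : ℝ) = 1)
    (hc' : ∫ x in Icc (-1 : ℝ) 1, jacobiWeight c' a' b' x = 1)
    (hA' : ∫ q in omegaDom, 2 * A' * (1 - q.1 + q.2) ^ a' * (1 + q.1 + q.2) ^ b' *
      (q.1 ^ 2 - 4 * q.2) ^ (-(1 / 2) : ℝ) = 1) : √(A / A') = c / c' := by
  rw [omegaDom_const_eq_sq hc hA, omegaDom_const_eq_sq hc' hA', ← div_pow,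
    Real.sqrt_sq (div_pos hc0 hc0').le]

lemma abs_mul_sq_rpow {x : ℝ} (hx : x ≠ 0) (a : ℝ) : |x| * (x ^ 2) ^ a = |x| ^ (2 * a + 1) := by
  rw [Real.rpow_add_one (abs_ne_zero.2 hx), Real.rpow_mul (abs_nonneg x), Real.rpow_two, sq_abs,
    mul_comm]

lemma quadMap_mem_omegaDom {q : ℝ × ℝ} (hq : q ∈ Ioo (-1 : ℝ) 1 ×ˢ Ioo (-1 : ℝ) 1)
    (hsub : q.1 - q.2 ≠ 0) (hadd : q.1 + q.2 ≠ 0) : quadMap q ∈ omegaDom := by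
  obtain ⟨⟨hx, hx'⟩, hy, hy'⟩ := hq
  have hsub' := sq_pos_of_ne_zero hsub
  have hadd' := sq_pos_of_ne_zero hadd
  refine mem_omegaDom_iff.2 ⟨?_, ?_, ?_, ?_⟩
  · rw [discrim_quadMap]
    exact mul_pos (by nlinarith) (by nlinarith)
  · simp only [quadMap]
    linarith
  · simp only [quadMap]
    linarith
  · simp only [quadMap, abs_lt]
    constructor <;> nlinarith

lemma squareWeight_jacobiWeight_ae_eq (c a b : ℝ) :
    squareWeight (jacobiWeight c a b) =ᵐ[volume.restrict sqDom] fun q =>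
      c ^ 2 * (4 : ℝ) ^ (-(1 / 2) : ℝ) * |q.1 - q.2| ^ (2 * a + 1) * |q.1 + q.2| ^ (2 * b + 1) *
        (1 - q.1 ^ 2) ^ (-(1 / 2) : ℝ) * (1 - q.2 ^ 2) ^ (-(1 / 2) : ℝ) := by
  rw [Measure.restrict_congr_set sqDom_ae_eq_Ioo_prod_Ioo]
  filter_upwards [ae_restrict_mem (measurableSet_Ioo.prod measurableSet_Ioo),
    ae_restrict_of_ae (ae_fst_ne_mul_snd 1), ae_restrict_of_ae (ae_fst_ne_mul_snd (-1))]
    with q hq hsub hadd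
  have hsub' : q.1 - q.2 ≠ 0 := fun h => hsub (by linarith)
  have hadd' : q.1 + q.2 ≠ 0 := fun h => hadd (by linarith)
  have hx : 0 ≤ 1 - q.1 ^ 2 := by nlinarith [hq.1.1, hq.1.2]
  have hy : 0 ≤ 1 - q.2 ^ 2 := by nlinarith [hq.2.1, hq.2.2]
  have hm : 1 - (quadMap q).1 + (quadMap q).2 = (q.1 - q.2) ^ 2 := by
    rw [quadMap]
    ring
  have hp : 1 + (quadMap q).1 + (quadMap q).2 = (q.1 + q.2) ^ 2 := by
    rw [quadMap]
    ring
  rw [squareWeight, omegaWeight_jacobiWeight c a b (quadMap_mem_omegaDom hq hsub' hadd'), hm, hp,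
    discrim_quadMap, Real.mul_rpow (by positivity) hy, Real.mul_rpow zero_le_four hx,
    ← abs_mul_sq_rpow hsub', ← abs_mul_sq_rpow hadd', sq_sub_sq, abs_mul]
  ring

theorem isONBVn_squareBasis_jacobi {a b : ℝ} (ha : -1 < a) (hb : -1 < b)
    {c : Fin 2 → Fin 2 → ℝ} {p : Fin 2 → Fin 2 → ℕ → ℝ[X]}
    (hp : ∀ i j : Fin 2, IsONPS (jacobiWeight (c i j) (a + (i : ℕ)) (b + (j : ℕ))) (p i j))
    (N : ℕ) :
    isONBVn sqDom
      (fun q => 2 * c 0 0 ^ 2 * (4 : ℝ) ^ (-(1 / 2) : ℝ) * |q.1 - q.2| ^ (2 * a + 1) *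
        |q.1 + q.2| ^ (2 * b + 1) * (1 - q.1 ^ 2) ^ (-(1 / 2) : ℝ) *
          (1 - q.2 ^ 2) ^ (-(1 / 2) : ℝ))
      N (squareBasis (fun i j => c i j / c 0 0) p N) := by
  have hc : c 0 0 ≠ 0 := fun h => by simpa [jacobiWeight, h] using (hp 0 0).2.2 0 0
  refine (isONBVn_congr_ae ?_).1 (isONBVn_squareBasis (w := jacobiWeight (c 0 0) a b)
    (fun i j => (hp i j).modWeight_jacobiWeight ha hb hc) N)
  filter_upwards [squareWeight_jacobiWeight_ae_eq (c 0 0) a b] with q hq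
  rw [hq]
  ring

end Jacobi

/-- fully explicit orthonormal bases of `V_{2n}` and `V_{2n+1}` for the
weight `𝒲_{α,β,-1/2}` on the square, in terms of Jacobi polynomials evaluated at
`cos(θ∓φ)`. -/
theorem stmt_8
    (α β : ℝ) (hα : -1 < α) (hβ : -1 < β)
    (cab c11 c01 c10 : ℝ)
    (hcabp : 0 < cab) (hc11p : 0 < c11) (hc01p : 0 < c01) (hc10p : 0 < c10)
    (hcab : (∫ x in Icc (-1:ℝ) 1, cab * (1 - x) ^ α * (1 + x) ^ β) = 1)
    (hc11 : (∫ x in Icc (-1:ℝ) 1, c11 * (1 - x) ^ (α+1) * (1 + x) ^ (β+1)) = 1)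
    (hc01 : (∫ x in Icc (-1:ℝ) 1, c01 * (1 - x) ^ α * (1 + x) ^ (β+1)) = 1)
    (hc10 : (∫ x in Icc (-1:ℝ) 1, c10 * (1 - x) ^ (α+1) * (1 + x) ^ β) = 1)
    (pab p11 p01 p10 : ℕ → Polynomial ℝ)
    (hpab : IsONPS (fun x => cab * (1 - x) ^ α * (1 + x) ^ β) pab)
    (hp11 : IsONPS (fun x => c11 * (1 - x) ^ (α+1) * (1 + x) ^ (β+1)) p11)
    (hp01 : IsONPS (fun x => c01 * (1 - x) ^ α * (1 + x) ^ (β+1)) p01)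
    (hp10 : IsONPS (fun x => c10 * (1 - x) ^ (α+1) * (1 + x) ^ β) p10)
    (aab a11 a01 a10 : ℝ)
    (haabp : 0 < aab) (ha11p : 0 < a11) (ha01p : 0 < a01) (ha10p : 0 < a10)
    (haab : (∫ q in omegaDom, 2 * aab * (1 - q.1 + q.2) ^ α * (1 + q.1 + q.2) ^ β
        * (q.1^2 - 4*q.2) ^ (-(1/2) : ℝ)) = 1)
    (ha11 : (∫ q in omegaDom, 2 * a11 * (1 - q.1 + q.2) ^ (α+1) * (1 + q.1 + q.2) ^ (β+1)
        * (q.1^2 - 4*q.2) ^ (-(1/2) : ℝ)) = 1)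
    (ha01 : (∫ q in omegaDom, 2 * a01 * (1 - q.1 + q.2) ^ α * (1 + q.1 + q.2) ^ (β+1)
        * (q.1^2 - 4*q.2) ^ (-(1/2) : ℝ)) = 1)
    (ha10 : (∫ q in omegaDom, 2 * a10 * (1 - q.1 + q.2) ^ (α+1) * (1 + q.1 + q.2) ^ β
        * (q.1^2 - 4*q.2) ^ (-(1/2) : ℝ)) = 1)
    (CW : ℝ × ℝ → ℝ)
    (hCW : ∀ q : ℝ × ℝ, CW q
      = 2 * aab * (4:ℝ) ^ (-(1/2) : ℝ) * |q.1 - q.2| ^ (2*α+1) * |q.1 + q.2| ^ (2*β+1)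
        * (1 - q.1^2) ^ (-(1/2) : ℝ) * (1 - q.2^2) ^ (-(1/2) : ℝ)) :
    ∀ n : ℕ,
      (∃ Q : ℕ → MvPolynomial (Fin 2) ℝ,
        (∀ k, k < n → ∀ θ φ : ℝ, θ ∈ Icc (0:ℝ) π → φ ∈ Icc (0:ℝ) π →
          evalP (Q k) (Real.cos θ, Real.cos φ)
            = (Real.sqrt 2)⁻¹
              * ((pab n).eval (Real.cos (θ - φ)) * (pab k).eval (Real.cos (θ + φ))
                + (pab k).eval (Real.cos (θ - φ)) * (pab n).eval (Real.cos (θ + φ)))) ∧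
        (∀ θ φ : ℝ, θ ∈ Icc (0:ℝ) π → φ ∈ Icc (0:ℝ) π →
          evalP (Q n) (Real.cos θ, Real.cos φ)
            = (pab n).eval (Real.cos (θ - φ)) * (pab n).eval (Real.cos (θ + φ))) ∧
        (∀ m, m + 1 < n → ∀ θ φ : ℝ, θ ∈ Icc (0:ℝ) π → φ ∈ Icc (0:ℝ) π →
          evalP (Q (n + 1 + m)) (Real.cos θ, Real.cos φ)
            = Real.sqrt (a11 / aab) * (Real.sqrt 2)⁻¹
              * (Real.cos θ ^ 2 - Real.cos φ ^ 2)
              * ((p11 (n-1)).eval (Real.cos (θ - φ)) * (p11 m).eval (Real.cos (θ + φ))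
                + (p11 m).eval (Real.cos (θ - φ)) * (p11 (n-1)).eval (Real.cos (θ + φ)))) ∧
        (1 ≤ n → ∀ θ φ : ℝ, θ ∈ Icc (0:ℝ) π → φ ∈ Icc (0:ℝ) π →
          evalP (Q (2*n)) (Real.cos θ, Real.cos φ)
            = Real.sqrt (a11 / aab) * (Real.cos θ ^ 2 - Real.cos φ ^ 2)
              * (p11 (n-1)).eval (Real.cos (θ - φ)) * (p11 (n-1)).eval (Real.cos (θ + φ))) ∧
        isONBVn sqDom CW (2*n) Q) ∧
      (∃ Q : ℕ → MvPolynomial (Fin 2) ℝ,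
        (∀ k, k < n → ∀ θ φ : ℝ, θ ∈ Icc (0:ℝ) π → φ ∈ Icc (0:ℝ) π →
          evalP (Q k) (Real.cos θ, Real.cos φ)
            = Real.sqrt (a01 / aab) * (Real.sqrt 2)⁻¹ * (Real.cos θ + Real.cos φ)
              * ((p01 n).eval (Real.cos (θ - φ)) * (p01 k).eval (Real.cos (θ + φ))
                + (p01 k).eval (Real.cos (θ - φ)) * (p01 n).eval (Real.cos (θ + φ)))) ∧
        (∀ θ φ : ℝ, θ ∈ Icc (0:ℝ) π → φ ∈ Icc (0:ℝ) π →
          evalP (Q n) (Real.cos θ, Real.cos φ)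
            = Real.sqrt (a01 / aab) * (Real.cos θ + Real.cos φ)
              * (p01 n).eval (Real.cos (θ - φ)) * (p01 n).eval (Real.cos (θ + φ))) ∧
        (∀ k, k < n → ∀ θ φ : ℝ, θ ∈ Icc (0:ℝ) π → φ ∈ Icc (0:ℝ) π →
          evalP (Q (n + 1 + k)) (Real.cos θ, Real.cos φ)
            = Real.sqrt (a10 / aab) * (Real.sqrt 2)⁻¹ * (Real.cos θ - Real.cos φ)
              * ((p10 n).eval (Real.cos (θ - φ)) * (p10 k).eval (Real.cos (θ + φ))
                + (p10 k).eval (Real.cos (θ - φ)) * (p10 n).eval (Real.cos (θ + φ)))) ∧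
        (∀ θ φ : ℝ, θ ∈ Icc (0:ℝ) π → φ ∈ Icc (0:ℝ) π →
          evalP (Q (2*n+1)) (Real.cos θ, Real.cos φ)
            = Real.sqrt (a10 / aab) * (Real.cos θ - Real.cos φ)
              * (p10 n).eval (Real.cos (θ - φ)) * (p10 n).eval (Real.cos (θ + φ))) ∧
        isONBVn sqDom CW (2*n+1) Q) := by
  rw [sqrt_omegaDom_const_div hc01p hcabp hc01 ha01 hcab haab,
    sqrt_omegaDom_const_div hc10p hcabp hc10 ha10 hcab haab,
    sqrt_omegaDom_const_div hc11p hcabp hc11 ha11 hcab haab]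
  obtain rfl : aab = cab ^ 2 := omegaDom_const_eq_sq hcab haab
  obtain rfl : CW = _ := funext hCW
  let c : Fin 2 → Fin 2 → ℝ := ![![cab, c01], ![c10, c11]]
  let p : Fin 2 → Fin 2 → ℕ → Polynomial ℝ := ![![pab, p01], ![p10, p11]]
  have hp : ∀ i j : Fin 2, IsONPS (jacobiWeight (c i j) (α + (i : ℕ)) (β + (j : ℕ))) (p i j) := by
    simpa [Fin.forall_fin_two, c, p] using ⟨⟨hpab, hp01⟩, hp10, hp11⟩
  have hONB := isONBVn_squareBasis_jacobi hα hβ hp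
  refine fun n => ⟨⟨_, fun k hk θ φ _ _ => ?_, fun θ φ _ _ => ?_, fun m hm θ φ _ _ => ?_,
    fun hn θ φ _ _ => ?_, hONB (2 * n)⟩, _, fun k hk θ φ _ _ => ?_, fun θ φ _ _ => ?_,
    fun k hk θ φ _ _ => ?_, fun θ φ _ _ => ?_, hONB (2 * n + 1)⟩
  · simp [squareBasis_two_mul _ _ hk.le, evalP_squarePoly_cos _ _ _ _ hk, c, p, hcabp.ne']
  · simp [squareBasis_two_mul, evalP_squarePoly_self_cos, c, p, hcabp.ne']
  · simp [squareBasis_two_mul_add _ _ n rfl,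
      evalP_squarePoly_cos _ _ _ _ (Nat.lt_sub_of_add_lt hm), c, p, sq_sub_sq]
  · have hlast : 2 * n = n + 1 + (n - 1) := by omega
    simp [squareBasis_two_mul_add _ _ n hlast, evalP_squarePoly_self_cos, c, p, sq_sub_sq]
  · simp [squareBasis_two_mul_add_one _ _ hk.le, evalP_squarePoly_cos _ _ _ _ hk, c, p]
  · simp [squareBasis_two_mul_add_one, evalP_squarePoly_self_cos, c, p]
  · simp [squareBasis_two_mul_add_one_add _ _ rfl, evalP_squarePoly_cos _ _ _ _ hk, c, p]
  · have hlast : 2 * n + 1 = n + 1 + n := by omega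
    simp [squareBasis_two_mul_add_one_add _ _ hlast, evalP_squarePoly_self_cos, c, p]
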